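/- arXiv:2207.01729 — 2 statements merged into one kernel-verified Lean document; each statement's English description precedes it below -/
import Mathlib

section
/- Let n ≥ 1 and N ≥ 1 be integers and let p be a homogeneous real polynomial of degree N in n variables such that: (1) every coefficient of p is ≥ 0; (2) p(1,…,1) = 1; (3) (Central Ray Hypothesis) all first-order partial derivatives ∂p/∂x_j at the point e = (1,…,1) are equal to one common value k > 0. Let A be a real symmetric positive definite n×n matrix with diagonal entries a₁₁,…,a_{nn}. Then p(a₁₁,…,a_{nn})^{1/N} ≥ (det A)^{1/n}. -/
/-!
Write `p = ∑ c_d x^d`. The coefficients `c_d` are nonnegative with sum `p(e) = 1`, so the weighted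
AM-GM inequality bounds `p(a)` below by `∏_d (a^d)^{c_d} = ∏_j a_j ^ (∑_d c_d d_j)`. The exponent
of `a_j` is `∂p/∂x_j (e) = k`, hence `p(a) ≥ (∏ a_j)^k` (`rpow_prod_le_eval`), and Euler's identity
at `e` gives `n k = N`. Hadamard's inequality `det A ≤ ∏ a_jj` (`det_le_prod_diag`) then finishes
the proof. Hadamard's inequality itself follows by rescaling `A` to unit diagonal: the eigenvalues
then sum to `n`, and `λ ≤ exp (λ - 1)` shows that their product is at most `1`.
-/

open MvPolynomial

/-- Hadamard's inequality in the normalised case of unit diagonal. -/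
lemma det_le_one_of_diag_eq_one {n : ℕ} {B : Matrix (Fin n) (Fin n) ℝ} (hB : B.PosDef)
    (hdiag : ∀ i, B i i = 1) : B.det ≤ 1 := by
  have htr : ∑ i, hB.isHermitian.eigenvalues i = n := by
    have h := hB.isHermitian.trace_eq_sum_eigenvalues
    simp only [Matrix.trace, Matrix.diag, hdiag] at h
    simpa using h.symm
  rw [hB.isHermitian.det_eq_prod_eigenvalues]
  calc ∏ i, hB.isHermitian.eigenvalues i
      ≤ ∏ i, Real.exp (hB.isHermitian.eigenvalues i - 1) :=
        Finset.prod_le_prod (fun i _ => (hB.eigenvalues_pos i).le)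
          (fun i _ => by linarith [Real.add_one_le_exp (hB.isHermitian.eigenvalues i - 1)])
    _ = 1 := by
        rw [← Real.exp_sum, Finset.sum_sub_distrib, htr]
        simp

/-- Hadamard's inequality for positive definite matrices. -/
lemma det_le_prod_diag {n : ℕ} {A : Matrix (Fin n) (Fin n) ℝ} (hA : A.PosDef) :
    A.det ≤ ∏ i, A i i := by
  have hpos : ∀ i, 0 < A i i := fun i => hA.diag_pos
  set s : Fin n → ℝ := fun i => (√(A i i))⁻¹ with hs
  have hs0 : ∀ i, 0 < s i := fun i => inv_pos.2 (Real.sqrt_pos.2 (hpos i))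
  have hss : ∀ i, s i * s i = (A i i)⁻¹ := fun i => by
    simp only [hs]
    rw [← mul_inv, Real.mul_self_sqrt (hpos i).le]
  have hB : (Matrix.diagonal s * A * Matrix.diagonal s).PosDef := by
    have hinj : Function.Injective (Matrix.diagonal s).mulVec := by
      rw [Matrix.mulVec_injective_iff_isUnit, Matrix.isUnit_iff_isUnit_det, Matrix.det_diagonal]
      exact (Finset.prod_pos fun i _ => hs0 i).ne'.isUnit
    simpa using hA.conjTranspose_mul_mul_same hinj
  have h1 := det_le_one_of_diag_eq_one hB (fun i => by
    rw [Matrix.mul_diagonal, Matrix.diagonal_mul, mul_right_comm, hss]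
    exact inv_mul_cancel₀ (hpos i).ne')
  rw [Matrix.det_mul, Matrix.det_mul, Matrix.det_diagonal, mul_right_comm,
    ← Finset.prod_mul_distrib, Finset.prod_congr rfl (fun i _ => hss i),
    Finset.prod_inv_distrib] at h1
  exact (inv_mul_le_one₀ (Finset.prod_pos fun i _ => hpos i)).1 h1

lemma eval_one_pderiv {n : ℕ} (p : MvPolynomial (Fin n) ℝ) (j : Fin n) :
    eval (fun _ => (1 : ℝ)) (pderiv j p) = ∑ d ∈ p.support, p.coeff d * d j := by
  conv_lhs => rw [p.as_sum, map_sum, map_sum]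
  refine Finset.sum_congr rfl fun d _ => ?_
  simp [pderiv_monomial, eval_monomial]

/-- The lower bound on `p` by a power of the product of the variables, from weighted AM-GM with the
coefficients of `p` as weights. -/
lemma rpow_prod_le_eval {n : ℕ} (p : MvPolynomial (Fin n) ℝ) (hcoeff : ∀ d, 0 ≤ p.coeff d)
    (hnorm : eval (fun _ : Fin n => (1 : ℝ)) p = 1) (k : ℝ)
    (hCRH : ∀ j : Fin n, eval (fun _ : Fin n => (1 : ℝ)) (pderiv j p) = k)
    (a : Fin n → ℝ) (ha : ∀ i, 0 < a i) :
    (∏ i, a i) ^ k ≤ eval a p := by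
  have hsum : ∑ d ∈ p.support, p.coeff d = 1 := by
    rw [← hnorm, eval_eq']
    simp
  have h := Real.geom_mean_le_arith_mean_weighted p.support (fun d => p.coeff d)
    (fun d => ∏ i, a i ^ d i) (fun d _ => hcoeff d) hsum
    (fun d _ => Finset.prod_nonneg fun i _ => (pow_pos (ha i) _).le)
  rw [eval_eq']
  refine le_trans (le_of_eq ?_) h
  calc (∏ i, a i) ^ k = ∏ i, a i ^ k :=
        (Real.finsetProd_rpow _ _ (fun i _ => (ha i).le) k).symm
    _ = ∏ i, ∏ d ∈ p.support, (a i ^ d i) ^ p.coeff d := by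
        refine Finset.prod_congr rfl fun i _ => ?_
        rw [← hCRH i, eval_one_pderiv, Real.rpow_sum_of_pos (ha i)]
        refine Finset.prod_congr rfl fun d _ => ?_
        rw [mul_comm, Real.rpow_mul (ha i).le, Real.rpow_natCast]
    _ = ∏ d ∈ p.support, (∏ i, a i ^ d i) ^ p.coeff d := by
        rw [Finset.prod_comm]
        exact Finset.prod_congr rfl fun d _ =>
          Real.finsetProd_rpow _ _ (fun i _ => (pow_pos (ha i) _).le) _

/-- Section 10, Family 1 (diagonal operators): if `p` satisfies the hypotheses of the
Basic Lemma 2.1 (nonnegative coefficients, normalization `p(1,…,1) = 1`, and the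
Central Ray Hypothesis), then for every real symmetric positive definite matrix `A`
with diagonal entries `a₁₁,…,aₙₙ`, `p(a₁₁,…,aₙₙ)^{1/N} ≥ (det A)^{1/n}`. -/
theorem diagonal_operator_determinant_majorization
    (n N : ℕ) (hn : 1 ≤ n) (hN : 1 ≤ N)
    (p : MvPolynomial (Fin n) ℝ)
    (hhom : p.IsHomogeneous N)
    (hcoeff : ∀ d, 0 ≤ p.coeff d)
    (hnorm : eval (fun _ : Fin n => (1 : ℝ)) p = 1)
    (k : ℝ) (hk : 0 < k)
    (hCRH : ∀ j : Fin n, eval (fun _ : Fin n => (1 : ℝ)) (pderiv j p) = k)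
    (A : Matrix (Fin n) (Fin n) ℝ) (hA : A.PosDef) :
    A.det ^ ((1 : ℝ) / n) ≤ (eval (fun i => A i i) p) ^ ((1 : ℝ) / N) := by
  have hpos : ∀ i, 0 < A i i := fun i => hA.diag_pos
  have hn0 : (n : ℝ) ≠ 0 := by positivity
  have hN0 : (N : ℝ) ≠ 0 := by positivity
  have hnk : (n : ℝ) * k = N := by
    have h := congrArg (eval (fun _ : Fin n => (1 : ℝ))) hhom.sum_X_mul_pderiv
    simpa [map_sum, hCRH, hnorm] using h
  have hP : 0 ≤ ∏ i, A i i := Finset.prod_nonneg fun i _ => (hpos i).le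
  have hexp : (1 : ℝ) / n = k * (1 / N) := by
    rw [← hnk]
    field_simp
  calc A.det ^ ((1 : ℝ) / n) ≤ (∏ i, A i i) ^ ((1 : ℝ) / n) :=
        Real.rpow_le_rpow hA.det_pos.le (det_le_prod_diag hA) (by positivity)
    _ = ((∏ i, A i i) ^ k) ^ ((1 : ℝ) / N) := by rw [hexp, Real.rpow_mul hP]
    _ ≤ (eval (fun i => A i i) p) ^ ((1 : ℝ) / N) :=
        Real.rpow_le_rpow (Real.rpow_nonneg hP _)
          (rpow_prod_le_eval p hcoeff hnorm k hCRH _ hpos) (by positivity)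
end

section
/- Let V be a finite-dimensional real inner product space and Γ ⊆ V a nonempty open convex cone which is regular, meaning cl(Γ) ∩ (−cl(Γ)) = {0}. Let N ≥ 1 and let g : V → ℝ be continuous with g(t·x) = t^N·g(x) for all t > 0 and x ∈ V, g(x) > 0 for all x ∈ Γ, and g(x) = 0 for all x ∈ ∂Γ. Let y belong to the (topological) interior of the polar cone Γ⁰ := {y ∈ V : ⟨y, x⟩ ≥ 0 for all x ∈ Γ}. Then for all constants c₁, c₂ ∈ ℝ the set K_{c₁,c₂} := {x ∈ Γ : ⟨y, x⟩ ≤ c₁ and log g(x) ≥ c₂} is compact. -/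
/-!
The set equals `closure Γ ∩ {⟪y, x⟫ ≤ c₁} ∩ {exp c₂ ≤ g x}`: points of the closure outside `Γ` lie on
`frontier Γ`, where `g` vanishes, and are excluded by `exp c₂ ≤ g x`. Hence it is closed. It is
bounded because an interior point `y` of the polar cone satisfies `ε * ‖x‖ ≤ ⟪y, x⟫` on `Γ` for
some `ε > 0` (`exists_mul_norm_le_inner`).
-/

open scoped RealInnerProductSpace

/-- An interior point of the polar cone is coercive on `Γ`. -/
theorem exists_mul_norm_le_inner {V : Type*} [NormedAddCommGroup V] [InnerProductSpace ℝ V]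
    {Γ : Set V} {y : V} (hy : y ∈ interior {z : V | ∀ x ∈ Γ, 0 ≤ ⟪z, x⟫}) :
    ∃ ε : ℝ, 0 < ε ∧ ∀ x ∈ Γ, ε * ‖x‖ ≤ ⟪y, x⟫ := by
  obtain ⟨δ, hδ, hball⟩ := Metric.mem_nhds_iff.1 (mem_interior_iff_mem_nhds.1 hy)
  refine ⟨δ / 2, by positivity, fun x hx => ?_⟩
  rcases eq_or_ne x 0 with rfl | hx0
  · simp
  have hn : 0 < ‖x‖ := norm_pos_iff.2 hx0
  -- Moving `y` by `δ / 2` in the direction `-x` stays inside the polar cone.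
  have hz : y - (δ / 2 / ‖x‖) • x ∈ Metric.ball y δ := by
    rw [Metric.mem_ball, dist_eq_norm, sub_sub_cancel_left, norm_neg, norm_smul,
      Real.norm_of_nonneg (by positivity), div_mul_cancel₀ _ hn.ne']
    linarith
  have h := hball hz x hx
  rw [inner_sub_left, real_inner_smul_left, real_inner_self_eq_norm_sq] at h
  have e : δ / 2 / ‖x‖ * ‖x‖ ^ 2 = δ / 2 * ‖x‖ := by field_simp
  linarith

/-- Corollary C.3: under the hypotheses of the Exhaustion Theorem (regular nonempty
open convex cone `Γ`, `g` continuous, positively homogeneous of degree `N`, positive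
on `Γ`, vanishing on `∂Γ`, and `y` interior to the polar cone `Γ⁰`), for all
constants `c₁, c₂` the set `{x ∈ Γ : ⟨y,x⟩ ≤ c₁ and log g(x) ≥ c₂}` is compact. -/
theorem exhaustion_corollary
    (V : Type*) [NormedAddCommGroup V] [InnerProductSpace ℝ V] [FiniteDimensional ℝ V]
    (Γ : Set V) (hne : Γ.Nonempty) (hopen : IsOpen Γ) (hconv : Convex ℝ Γ)
    (hcone : ∀ x ∈ Γ, ∀ t : ℝ, 0 < t → t • x ∈ Γ)
    (hreg : closure Γ ∩ (-closure Γ) = {0})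
    (N : ℕ) (hN : 1 ≤ N)
    (g : V → ℝ) (hgcont : Continuous g)
    (hghom : ∀ t : ℝ, 0 < t → ∀ x : V, g (t • x) = t ^ N * g x)
    (hgpos : ∀ x ∈ Γ, 0 < g x)
    (hgbd : ∀ x ∈ frontier Γ, g x = 0)
    (y : V) (hy : y ∈ interior {z : V | ∀ x ∈ Γ, 0 ≤ ⟪z, x⟫}) :
    ∀ c₁ c₂ : ℝ, IsCompact {x ∈ Γ | ⟪y, x⟫ ≤ c₁ ∧ c₂ ≤ Real.log (g x)} := by
  intro c₁ c₂
  obtain ⟨ε, hε, hco⟩ := exists_mul_norm_le_inner hy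
  have hset : {x ∈ Γ | ⟪y, x⟫ ≤ c₁ ∧ c₂ ≤ Real.log (g x)} =
      closure Γ ∩ ({x | ⟪y, x⟫ ≤ c₁} ∩ {x | Real.exp c₂ ≤ g x}) := by
    ext x
    constructor
    · rintro ⟨hx, h1, h2⟩
      exact ⟨subset_closure hx, h1, (Real.le_log_iff_exp_le (hgpos x hx)).1 h2⟩
    · rintro ⟨hx, h1, h2⟩
      have h2' : Real.exp c₂ ≤ g x := h2
      have hxΓ : x ∈ Γ := by
        by_contra hn
        have h0 := hgbd x (by rw [hopen.frontier_eq]; exact ⟨hx, hn⟩)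
        linarith [Real.exp_pos c₂]
      exact ⟨hxΓ, h1, (Real.le_log_iff_exp_le (hgpos x hxΓ)).2 h2⟩
  refine Metric.isCompact_of_isClosed_isBounded ?_ ?_
  · rw [hset]
    exact isClosed_closure.inter
      ((isClosed_le (by fun_prop) continuous_const).inter (isClosed_le continuous_const hgcont))
  · refine isBounded_iff_forall_norm_le.2 ⟨c₁ / ε, ?_⟩
    rintro x ⟨hx, h1, -⟩
    rw [le_div_iff₀ hε, mul_comm]
    exact (hco x hx).trans h1
end
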